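/- Let $P_1$ and $P_2$ be two-dimensional lattice polygons such that $P_1 \cap P_2$ is a segment $[p,q]$ of lattice length $1$ with $p, q \in \mathbb{Z}^2$, $[p,q]$ is an edge of both $P_1$ and $P_2$, and $P_3 := P_1 \cup P_2$ is convex. For $i = 1, 2$, let $h_i : A(P_i) \to \mathbb{R}$ be a height function inducing a subdivision $\Delta_i$ of $P_i$ and satisfying $h_i(p) = h_i(q) = 0$ and $h_i(x) > 0$ for all $x \in A(P_i) \setminus \{p,q\}$. Let $f : \mathbb{R}^2 \to \mathbb{R}$ be an affine map with $f(p) = f(q) = 0$ and $f > 0$ on $P_2 \setminus [p,q]$ (hence $f < 0$ on $P_1 \setminus [p,q]$). Then for all sufficiently large $c > 0$, the height function $h : A(P_3) \to \mathbb{R}$ defined by $h(x) = h_1(x)$ for $x \in A(P_1)$ and $h(x) = h_2(x) + c \cdot f(x)$ for $x \in A(P_2)$ (these agree on $A(P_1) \cap A(P_2) = \{p, q\}$, where both vanish) induces the subdivision $\Delta_1 \cup \Delta_2$ of $P_3$. -/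

import Mathlib

/-- A point of `ℝ × ℝ` is a lattice point if both coordinates are integers. -/
def IsLatticePoint (x : ℝ × ℝ) : Prop := ∃ a b : ℤ, x = ((a : ℝ), (b : ℝ))

/-- `A(P)`: the set of lattice points of `P`. -/
def latticePoints (P : Set (ℝ × ℝ)) : Set (ℝ × ℝ) := {x ∈ P | IsLatticePoint x}

/-- A lattice polygon: the convex hull of a finite set of lattice points. -/
def IsLatticePolygon (P : Set (ℝ × ℝ)) : Prop :=
  ∃ S : Finset (ℝ × ℝ), (∀ x ∈ S, IsLatticePoint x) ∧ P = convexHull ℝ (S : Set (ℝ × ℝ))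

/-- The cells of the subdivision induced by a height function `h` on the point set `A`:
the two-dimensional sets of the form `conv {x ∈ A | ℓ x = h x}` where `ℓ` is an affine
map with `ℓ ≤ h` on `A`. -/
def inducedCells (A : Set (ℝ × ℝ)) (h : ℝ × ℝ → ℝ) : Set (Set (ℝ × ℝ)) :=
  { C | (∃ ℓ : (ℝ × ℝ) →ᵃ[ℝ] ℝ, (∀ x ∈ A, ℓ x ≤ h x) ∧
      C = convexHull ℝ {x ∈ A | ℓ x = h x}) ∧ ¬ Collinear ℝ C }

/-- A subdivision of a two-dimensional lattice polygon `P`: a finite collection of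
two-dimensional lattice polygons covering `P`, any two of which meet in a common
(possibly empty) face of each. -/
def IsSubdivision (P : Set (ℝ × ℝ)) (Δ : Set (Set (ℝ × ℝ))) : Prop :=
  Δ.Finite ∧
  (∀ C ∈ Δ, IsLatticePolygon C ∧ ¬ Collinear ℝ C) ∧
  ⋃₀ Δ = P ∧
  ∀ C ∈ Δ, ∀ D ∈ Δ, IsExposed ℝ C (C ∩ D) ∧ IsExposed ℝ D (C ∩ D)

/-- A regular subdivision: one induced by some height function on the lattice points. -/
def IsRegularSubdivision (P : Set (ℝ × ℝ)) (Δ : Set (Set (ℝ × ℝ))) : Prop :=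
  IsSubdivision P Δ ∧ ∃ h : ℝ × ℝ → ℝ, Δ = inducedCells (latticePoints P) h

/-- The segment `[p,q]` is an edge of the convex polygon `P`: it is contained in `P` and
there is an affine map vanishing on `[p,q]` and strictly positive on `P \ [p,q]`. -/
def IsEdgeSeg (P : Set (ℝ × ℝ)) (p q : ℝ × ℝ) : Prop :=
  segment ℝ p q ⊆ P ∧
  ∃ f : (ℝ × ℝ) →ᵃ[ℝ] ℝ, (∀ x ∈ segment ℝ p q, f x = 0) ∧
    (∀ x ∈ P \ segment ℝ p q, 0 < f x)

/-- The segment between the lattice points `p ≠ q` has lattice length one: `p` and `q` are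
the only lattice points it contains. -/
def LatticeLengthOne (p q : ℝ × ℝ) : Prop :=
  p ≠ q ∧ IsLatticePoint p ∧ IsLatticePoint q ∧
    ∀ x ∈ segment ℝ p q, IsLatticePoint x → x = p ∨ x = q

open Filter Topology MeasureTheory

lemma aux_finite {P : Set (ℝ × ℝ)} (hP : IsLatticePolygon P) : (latticePoints P).Finite := by
  obtain ⟨S, -, rfl⟩ := hP
  have hb : Bornology.IsBounded (convexHull ℝ (S : Set (ℝ × ℝ))) :=
    (isBounded_convexHull).2 S.finite_toSet.isBounded
  obtain ⟨R, hR⟩ := hb.subset_closedBall 0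
  refine Set.Finite.subset (((Set.finite_Icc (-⌈R⌉) ⌈R⌉).prod (Set.finite_Icc (-⌈R⌉) ⌈R⌉)).image
    (fun z : ℤ × ℤ => ((z.1 : ℝ), (z.2 : ℝ)))) ?_
  rintro x ⟨hx, a, b, rfl⟩
  have h := hR hx
  rw [mem_closedBall_zero_iff, Prod.norm_def, sup_le_iff] at h
  simp only [Real.norm_eq_abs, abs_le] at h
  have hc := Int.le_ceil R
  refine ⟨(a, b), ⟨⟨?_, ?_⟩, ?_, ?_⟩, rfl⟩
  all_goals
    dsimp only
    rw [← @Int.cast_le ℝ]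
    push_cast
    linarith [h.1.1, h.1.2, h.2.1, h.2.2]

lemma aux_coord (f : (ℝ × ℝ) →ᵃ[ℝ] ℝ) :
    ∃ α β γ : ℝ, ∀ x : ℝ × ℝ, f x = α * x.1 + β * x.2 + γ := by
  refine ⟨f.linear (1, 0), f.linear (0, 1), f 0, fun x => ?_⟩
  have h1 : f x = f.linear x + f 0 := by
    have := f.map_vadd 0 x
    simpa using this
  have h2 : x = x.1 • ((1 : ℝ), (0 : ℝ)) + x.2 • ((0 : ℝ), (1 : ℝ)) := by
    ext <;> simp
  rw [h1]
  conv_lhs => rw [h2]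
  rw [map_add, map_smul, map_smul]
  simp [mul_comm]

lemma aux_neg {P₁ P₂ : Set (ℝ × ℝ)} {p q : ℝ × ℝ} (hc₁ : Convex ℝ P₁) (hc₂ : Convex ℝ P₂)
    (hdim₂ : ¬ Collinear ℝ P₂) (hpq : p ≠ q)
    (hcap : P₁ ∩ P₂ = segment ℝ p q) (hedge₁ : IsEdgeSeg P₁ p q)
    (f : (ℝ × ℝ) →ᵃ[ℝ] ℝ) (hfp : f p = 0) (hfq : f q = 0)
    (hfpos : ∀ x ∈ P₂ \ segment ℝ p q, 0 < f x) :
    ∀ x ∈ P₁ \ segment ℝ p q, f x < 0 := by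
  intro x hx
  obtain ⟨-, g, hg0, hgpos⟩ := hedge₁
  have hgp := hg0 p (left_mem_segment ℝ p q)
  have hgq := hg0 q (right_mem_segment ℝ p q)
  have hseg : Collinear ℝ (segment ℝ p q) := by
    rw [collinear_iff_of_mem (left_mem_segment ℝ p q)]
    refine ⟨q - p, fun z hz => ?_⟩
    rw [segment_eq_image'] at hz
    obtain ⟨t, -, rfl⟩ := hz
    exact ⟨t, by simp [add_comm]⟩
  obtain ⟨y, hy2, hys⟩ : ∃ y ∈ P₂, y ∉ segment ℝ p q := by
    by_contra! hcon
    exact hdim₂ (hseg.subset hcon)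
  have hfy := hfpos y ⟨hy2, hys⟩
  have hgx := hgpos x hx
  have hp12 : p ∈ P₁ ∩ P₂ := hcap ▸ left_mem_segment ℝ p q
  have hq12 : q ∈ P₁ ∩ P₂ := hcap ▸ right_mem_segment ℝ p q
  have hf0 : ∀ z ∈ segment ℝ p q, f z = 0 := by
    intro z hz
    rw [segment_eq_image_lineMap] at hz
    obtain ⟨t, -, rfl⟩ := hz
    rw [AffineMap.apply_lineMap, hfp, hfq]
    simp
  obtain ⟨α, β, γ, hf⟩ := aux_coord f
  obtain ⟨α', β', γ', hg⟩ := aux_coord g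
  have e1 : α * (q.1 - p.1) + β * (q.2 - p.2) = 0 := by
    have := hf p; have := hf q; linarith
  have e2 : α' * (q.1 - p.1) + β' * (q.2 - p.2) = 0 := by
    have := hg p; have := hg q; linarith
  have hd : q.1 - p.1 ≠ 0 ∨ q.2 - p.2 ≠ 0 := by
    by_contra! hcon
    exact hpq (Prod.ext (by linarith [hcon.1]) (by linarith [hcon.2]))
  have hdet : α * β' - β * α' = 0 := by
    rcases hd with hd | hd
    · apply mul_right_cancel₀ hd
      linear_combination β' * e1 - β * e2
    · apply mul_right_cancel₀ hd
      linear_combination α * e2 - α' * e1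
  have hprop : g y * f x = f y * g x := by
    have fx : f x = α * (x.1 - p.1) + β * (x.2 - p.2) := by linarith [hf x, hf p]
    have fy : f y = α * (y.1 - p.1) + β * (y.2 - p.2) := by linarith [hf y, hf p]
    have gx : g x = α' * (x.1 - p.1) + β' * (x.2 - p.2) := by linarith [hg x, hg p]
    have gy : g y = α' * (y.1 - p.1) + β' * (y.2 - p.2) := by linarith [hg y, hg p]
    rw [fx, fy, gx, gy]
    linear_combination ((y.2 - p.2) * (x.1 - p.1) - (y.1 - p.1) * (x.2 - p.2)) * hdet
  have hne : f x ≠ 0 := by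
    intro h0
    rw [h0, mul_zero] at hprop
    exact (mul_pos hfy hgx).ne hprop
  by_contra! hge
  have hfx : 0 < f x := lt_of_le_of_ne hge hne.symm
  obtain ⟨r, hr⟩ : ∃ r, r = f x / f y := ⟨_, rfl⟩
  have hr0 : 0 < r := hr ▸ div_pos hfx hfy
  have hrf : f x = r * f y := by rw [hr]; field_simp
  obtain ⟨a, ha1, ha2⟩ : ∃ a : ℝ, x.1 = p.1 + a * (q.1 - p.1) + r * (y.1 - p.1) ∧
      x.2 = p.2 + a * (q.2 - p.2) + r * (y.2 - p.2) := by
    have key : α * (x.1 - p.1 - r * (y.1 - p.1)) + β * (x.2 - p.2 - r * (y.2 - p.2)) = 0 := by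
      have fx : f x = α * (x.1 - p.1) + β * (x.2 - p.2) := by linarith [hf x, hf p]
      have fy : f y = α * (y.1 - p.1) + β * (y.2 - p.2) := by linarith [hf y, hf p]
      rw [fx, fy] at hrf
      linear_combination hrf
    have hab : α ≠ 0 ∨ β ≠ 0 := by
      by_contra! hcon
      have h1 := hf p
      have h2 := hf y
      rw [hcon.1, hcon.2] at h1 h2
      linarith
    set d1 := q.1 - p.1
    set d2 := q.2 - p.2
    set w1 := x.1 - p.1 - r * (y.1 - p.1) with hw1
    set w2 := x.2 - p.2 - r * (y.2 - p.2) with hw2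
    have hcross : w1 * d2 - w2 * d1 = 0 := by
      rcases hab with hab | hab
      · apply mul_right_cancel₀ hab
        linear_combination d2 * key - w2 * e1
      · apply mul_right_cancel₀ hab
        linear_combination w1 * e1 - d1 * key
    rcases hd with hd | hd
    · refine ⟨w1 / d1, ?_, ?_⟩
      · field_simp; linarith
      · have : w1 / d1 * d2 = w2 := by field_simp; linarith
        linarith
    · refine ⟨w2 / d2, ?_, ?_⟩
      · have : w2 / d2 * d1 = w1 := by field_simp; linarith
        linarith
      · field_simp; linarith
  obtain ⟨N, hN⟩ : ∃ N, N = 1 + 2 * |a| + 2 * |1 - a - r| := ⟨_, rfl⟩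
  have hNpos : 0 < N := by rw [hN]; positivity
  have ht : 0 < N⁻¹ := inv_pos.2 hNpos
  have htN : N⁻¹ * N = 1 := inv_mul_cancel₀ hNpos.ne'
  obtain ⟨t, htt⟩ : ∃ t, t = N⁻¹ := ⟨_, rfl⟩
  rw [← htt] at ht htN
  have hhalf : (1 - t) / 2 = t * |a| + t * |1 - a - r| := by
    rw [hN] at htN; linarith
  have hn1 : 0 ≤ t * |a| := by positivity
  have hn2 : 0 ≤ t * |1 - a - r| := by positivity
  have hn3 : 0 ≤ t * (|a| + a) := mul_nonneg ht.le (by linarith [neg_abs_le a])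
  have hn4 : 0 ≤ t * (|1 - a - r| + (1 - a - r)) :=
    mul_nonneg ht.le (by linarith [neg_abs_le (1 - a - r)])
  have comb : ∀ (Q : Set (ℝ × ℝ)), Convex ℝ Q → ∀ u ∈ Q, ∀ v ∈ Q, ∀ w ∈ Q, ∀ b₁ b₂ b₃ : ℝ,
      0 ≤ b₁ → 0 ≤ b₂ → 0 ≤ b₃ → b₁ + b₂ + b₃ = 1 → b₁ • u + b₂ • v + b₃ • w ∈ Q := by
    intro Q hQ u hu v hv w hw b₁ b₂ b₃ h1 h2 h3 hs
    have := hQ.sum_mem (t := Finset.univ) (w := ![b₁, b₂, b₃]) (z := ![u, v, w])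
      (by intro i _; fin_cases i <;> simpa) (by simpa [Fin.sum_univ_three] using hs)
      (by intro i _; fin_cases i <;> simpa)
    simpa [Fin.sum_univ_three] using this
  have z1 := comb P₁ hc₁ p hp12.1 q hq12.1 x hx.1 ((1 - t) / 2) ((1 - t) / 2) t
    (by linarith) (by linarith) ht.le (by ring)
  have z2 := comb P₂ hc₂ p hp12.2 q hq12.2 y hy2 ((1 - t) / 2 + t * (1 - a - r))
    ((1 - t) / 2 + t * a) (t * r) (by linarith) (by linarith) (by positivity) (by ring)
  have hzz : ((1 - t) / 2 + t * (1 - a - r)) • p + ((1 - t) / 2 + t * a) • q + (t * r) • y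
      = ((1 - t) / 2) • p + ((1 - t) / 2) • q + t • x := by
    ext
    · simp only [Prod.fst_add, Prod.smul_fst, smul_eq_mul, ha1]; ring
    · simp only [Prod.snd_add, Prod.smul_snd, smul_eq_mul, ha2]; ring
  rw [hzz] at z2
  have hz : ((1 - t) / 2) • p + ((1 - t) / 2) • q + t • x ∈ segment ℝ p q := hcap ▸ ⟨z1, z2⟩
  have hz0 := hf0 _ hz
  rw [hf] at hz0
  simp only [Prod.fst_add, Prod.smul_fst, Prod.snd_add, Prod.smul_snd, smul_eq_mul] at hz0
  have : t * f x = 0 := by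
    have h1 := hf p
    have h2 := hf q
    rw [hfp] at h1
    rw [hfq] at h2
    rw [hf x]
    linear_combination hz0 + ((1 - t) / 2) * h1 + ((1 - t) / 2) * h2
  exact (mul_pos ht hfx).ne' this

lemma aux_le {S : Set (ℝ × ℝ)} {ℓ ℓ' : (ℝ × ℝ) →ᵃ[ℝ] ℝ} (h : ∀ x ∈ S, ℓ x ≤ ℓ' x) :
    ∀ x ∈ convexHull ℝ S, ℓ x ≤ ℓ' x := by
  have hc : Convex ℝ ((ℓ' - ℓ) ⁻¹' Set.Ici (0 : ℝ)) := (convex_Ici 0).affine_preimage _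
  intro x hx
  have := convexHull_min (s := S) (fun y hy => by simpa using h y hy) hc hx
  simpa using this

lemma aux_volume {C : Set (ℝ × ℝ)} (hC : Convex ℝ C) (hcol : ¬ Collinear ℝ C) :
    volume C ≠ 0 := by
  have hne : C.Nonempty := by
    by_contra h
    rw [Set.not_nonempty_iff_eq_empty] at h
    exact hcol (h ▸ collinear_empty ℝ _)
  have htop : vectorSpan ℝ C = ⊤ := by
    by_contra h
    have := Submodule.finrank_lt h
    rw [Module.finrank_prod, Module.finrank_self] at this
    exact hcol (collinear_iff_finrank_le_one.2 (by omega))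
  have hint : (interior C).Nonempty := by
    rw [hC.interior_nonempty_iff_affineSpan_eq_top,
      AffineSubspace.affineSpan_eq_top_iff_vectorSpan_eq_top_of_nonempty ℝ _ _ hne]
    exact htop
  exact (Measure.measure_pos_of_nonempty_interior _ hint).ne'

lemma aux_null {ℓ ℓ' : (ℝ × ℝ) →ᵃ[ℝ] ℝ} (hne : ℓ ≠ ℓ') : volume {x | ℓ x = ℓ' x} = 0 := by
  have hs : {x | ℓ x = ℓ' x} =
      (((affineSpan ℝ {(0 : ℝ)}).comap (ℓ - ℓ') : AffineSubspace ℝ (ℝ × ℝ)) : Set (ℝ × ℝ)) := by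
    ext x
    simp [sub_eq_zero]
  rw [hs]
  apply Measure.addHaar_affineSubspace
  intro htop
  apply hne
  ext x
  have : x ∈ {x | ℓ x = ℓ' x} := by rw [hs, htop]; trivial
  exact this

lemma aux_cover {A P : Set (ℝ × ℝ)} {h : ℝ × ℝ → ℝ} {Δ : Set (Set (ℝ × ℝ))} (hfin : Δ.Finite)
    (hsub : Δ ⊆ inducedCells A h) (hP : Convex ℝ P) (hA : A ⊆ P) (hcov : P ⊆ ⋃₀ Δ) :
    inducedCells A h ⊆ Δ := by
  rintro D ⟨⟨ℓ, hℓ, rfl⟩, hD⟩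
  by_contra hcon
  apply aux_volume (convex_convexHull ℝ _) hD
  have h1 : convexHull ℝ {x ∈ A | ℓ x = h x} ⊆
      ⋃ C ∈ Δ, (C ∩ convexHull ℝ {x ∈ A | ℓ x = h x}) := by
    intro x hx
    have hxP : x ∈ P := convexHull_min (fun y hy => hA hy.1) hP hx
    obtain ⟨C, hC, hxC⟩ := hcov hxP
    exact Set.mem_biUnion hC ⟨hxC, hx⟩
  refine measure_mono_null h1 ((measure_biUnion_null_iff hfin.countable).2 fun C hC => ?_)
  obtain ⟨⟨ℓ', hℓ', hCe⟩, -⟩ := hsub hC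
  have hne : ℓ ≠ ℓ' := by
    rintro rfl
    exact hcon (hCe ▸ hC)
  refine measure_mono_null ?_ (aux_null hne)
  rintro x ⟨hxC, hxD⟩
  rw [hCe] at hxC
  refine le_antisymm (aux_le ?_ x hxC) (aux_le ?_ x hxD)
  · rintro y ⟨hy, hy'⟩
    rw [hy']
    exact hℓ y hy
  · rintro y ⟨hy, hy'⟩
    rw [hy']
    exact hℓ' y hy

lemma aux_mem {A B : Set (ℝ × ℝ)} {h h' : ℝ × ℝ → ℝ} {C : Set (ℝ × ℝ)} {ℓ g : (ℝ × ℝ) →ᵃ[ℝ] ℝ}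
    (hAB : A ⊆ B) (hℓ : ∀ x ∈ A, ℓ x ≤ h x) (hC : C = convexHull ℝ {x ∈ A | ℓ x = h x})
    (hcol : ¬ Collinear ℝ C) (hh : ∀ x ∈ A, h' x = h x + g x)
    (hlt : ∀ x ∈ B, x ∉ A → ℓ x + g x < h' x) : C ∈ inducedCells B h' := by
  refine ⟨⟨ℓ + g, fun x hx => ?_, ?_⟩, hcol⟩
  · by_cases hxA : x ∈ A
    · have := hℓ x hxA
      have := hh x hxA
      simp only [AffineMap.coe_add, Pi.add_apply]
      linarith
    · exact (hlt x hx hxA).le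
  · rw [hC]
    congr 1
    ext x
    simp only [Set.mem_setOf_eq, AffineMap.coe_add, Pi.add_apply]
    constructor
    · rintro ⟨hxA, hx⟩
      exact ⟨hAB hxA, by rw [hh x hxA, hx]⟩
    · rintro ⟨hxB, hx⟩
      by_cases hxA : x ∈ A
      · exact ⟨hxA, by have := hh x hxA; linarith⟩
      · exact absurd hx (hlt x hxB hxA).ne

lemma aux_event {Δ : Set (Set (ℝ × ℝ))} {A : Set (ℝ × ℝ)} (hΔ : Δ.Finite) (hA : A.Finite)
    (u : Set (ℝ × ℝ) → ℝ × ℝ → ℝ) (v : ℝ × ℝ → ℝ) (hv : ∀ x ∈ A, 0 < v x) :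
    ∀ᶠ c : ℝ in atTop, ∀ C ∈ Δ, ∀ x ∈ A, u C x < c * v x := by
  rw [eventually_all_finite hΔ]
  intro C _
  rw [eventually_all_finite hA]
  intro x hx
  filter_upwards [eventually_gt_atTop (u C x / v x)] with c hc
  exact (div_lt_iff₀ (hv x hx)).1 hc

/-- Given normalized height functions `h₁, h₂` inducing subdivisions
`Δ₁, Δ₂` of the two polygons `P₁, P₂` glued along an edge `[p,q]` of lattice length one,
and an affine map `f` vanishing on the gluing line and positive on `P₂ \ [p,q]`, for all
sufficiently large `c > 0` the combined height function `h₁` on `A(P₁)` and `h₂ + c·f` on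
`A(P₂)` induces the subdivision `Δ₁ ∪ Δ₂` of `P₃ = P₁ ∪ P₂`. -/
theorem glued_height_function_induces_union
    (P₁ P₂ : Set (ℝ × ℝ)) (Δ₁ Δ₂ : Set (Set (ℝ × ℝ))) (p q : ℝ × ℝ)
    (hP₁ : IsLatticePolygon P₁) (hP₂ : IsLatticePolygon P₂)
    (hdim₁ : ¬ Collinear ℝ P₁) (hdim₂ : ¬ Collinear ℝ P₂)
    (hcap : P₁ ∩ P₂ = segment ℝ p q) (hlen : LatticeLengthOne p q)
    (hedge₁ : IsEdgeSeg P₁ p q) (hedge₂ : IsEdgeSeg P₂ p q)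
    (hconv : Convex ℝ (P₁ ∪ P₂))
    (h₁ h₂ : ℝ × ℝ → ℝ)
    (hsub₁ : IsSubdivision P₁ Δ₁) (hsub₂ : IsSubdivision P₂ Δ₂)
    (hind₁ : Δ₁ = inducedCells (latticePoints P₁) h₁)
    (hind₂ : Δ₂ = inducedCells (latticePoints P₂) h₂)
    (h₁p : h₁ p = 0) (h₁q : h₁ q = 0) (h₂p : h₂ p = 0) (h₂q : h₂ q = 0)
    (h₁pos : ∀ x ∈ latticePoints P₁ \ {p, q}, 0 < h₁ x)
    (h₂pos : ∀ x ∈ latticePoints P₂ \ {p, q}, 0 < h₂ x)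
    (f : (ℝ × ℝ) →ᵃ[ℝ] ℝ) (hfp : f p = 0) (hfq : f q = 0)
    (hfpos : ∀ x ∈ P₂ \ segment ℝ p q, 0 < f x) :
    ∃ c₀ : ℝ, 0 < c₀ ∧ ∀ c : ℝ, c₀ ≤ c → ∀ h : ℝ × ℝ → ℝ,
      (∀ x ∈ latticePoints P₁, h x = h₁ x) →
      (∀ x ∈ latticePoints P₂, h x = h₂ x + c * f x) →
      Δ₁ ∪ Δ₂ = inducedCells (latticePoints (P₁ ∪ P₂)) h := by
  obtain ⟨hpq, hpl, hql, hlat⟩ := hlen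
  have hc₁ : Convex ℝ P₁ := by
    obtain ⟨S, -, rfl⟩ := hP₁
    exact convex_convexHull ℝ _
  have hc₂ : Convex ℝ P₂ := by
    obtain ⟨S, -, rfl⟩ := hP₂
    exact convex_convexHull ℝ _
  have hfneg := aux_neg hc₁ hc₂ hdim₂ hpq hcap hedge₁ f hfp hfq hfpos
  have hoff₂ : ∀ x ∈ latticePoints P₂ \ latticePoints P₁, x ∈ P₂ \ segment ℝ p q :=
    fun x hx => ⟨hx.1.1, fun hs => hx.2 ⟨hedge₁.1 hs, hx.1.2⟩⟩
  have hoff₁ : ∀ x ∈ latticePoints P₁ \ latticePoints P₂, x ∈ P₁ \ segment ℝ p q :=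
    fun x hx => ⟨hx.1.1, fun hs => hx.2 ⟨hedge₂.1 hs, hx.1.2⟩⟩
  have hA₁ := aux_finite hP₁
  have hA₂ := aux_finite hP₂
  have hex₁ : ∀ C : Set (ℝ × ℝ), ∃ ℓ : (ℝ × ℝ) →ᵃ[ℝ] ℝ, C ∈ Δ₁ →
      (∀ x ∈ latticePoints P₁, ℓ x ≤ h₁ x) ∧
      C = convexHull ℝ {x ∈ latticePoints P₁ | ℓ x = h₁ x} := by
    intro C
    by_cases hC : C ∈ Δ₁
    · obtain ⟨⟨ℓ, hℓ⟩, -⟩ := hind₁ ▸ hC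
      exact ⟨ℓ, fun _ => hℓ⟩
    · exact ⟨0, fun h => absurd h hC⟩
  have hex₂ : ∀ C : Set (ℝ × ℝ), ∃ ℓ : (ℝ × ℝ) →ᵃ[ℝ] ℝ, C ∈ Δ₂ →
      (∀ x ∈ latticePoints P₂, ℓ x ≤ h₂ x) ∧
      C = convexHull ℝ {x ∈ latticePoints P₂ | ℓ x = h₂ x} := by
    intro C
    by_cases hC : C ∈ Δ₂
    · obtain ⟨⟨ℓ, hℓ⟩, -⟩ := hind₂ ▸ hC
      exact ⟨ℓ, fun _ => hℓ⟩
    · exact ⟨0, fun h => absurd h hC⟩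
  choose L₁ hL₁ using hex₁
  choose L₂ hL₂ using hex₂
  have ev₁ := aux_event hsub₁.1 (hA₂.subset (Set.diff_subset (t := latticePoints P₁)))
    (fun C x => L₁ C x - h₂ x) f (fun x hx => hfpos x (hoff₂ x hx))
  have ev₂ := aux_event hsub₂.1 (hA₁.subset (Set.diff_subset (t := latticePoints P₂)))
    (fun C x => L₂ C x - h₁ x) (fun x => - f x)
    (fun x hx => neg_pos.2 (hfneg x (hoff₁ x hx)))
  obtain ⟨c₁, hc₀⟩ := eventually_atTop.1 (ev₁.and ev₂)
  refine ⟨max c₁ 1, by positivity, fun c hc h hh₁ hh₂ => ?_⟩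
  obtain ⟨hb₁, hb₂⟩ := hc₀ c (le_trans (le_max_left _ _) hc)
  have hsub : Δ₁ ∪ Δ₂ ⊆ inducedCells (latticePoints (P₁ ∪ P₂)) h := by
    rintro C (hC | hC)
    · obtain ⟨hl, hCe⟩ := hL₁ C hC
      refine aux_mem (g := 0) (fun x hx => ⟨Or.inl hx.1, hx.2⟩) hl hCe (hsub₁.2.1 C hC).2
        (fun x hx => by simpa using hh₁ x hx) ?_
      rintro x ⟨hx | hx, hxl⟩ hxn
      · exact absurd ⟨hx, hxl⟩ hxn
      · have := hb₁ C hC x ⟨⟨hx, hxl⟩, hxn⟩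
        rw [hh₂ x ⟨hx, hxl⟩]
        simp only [AffineMap.coe_zero, Pi.zero_apply]
        linarith
    · obtain ⟨hl, hCe⟩ := hL₂ C hC
      refine aux_mem (g := c • f) (fun x hx => ⟨Or.inr hx.1, hx.2⟩) hl hCe (hsub₂.2.1 C hC).2
        (fun x hx => by simpa using hh₂ x hx) ?_
      rintro x ⟨hx | hx, hxl⟩ hxn
      · have := hb₂ C hC x ⟨⟨hx, hxl⟩, hxn⟩
        rw [hh₁ x ⟨hx, hxl⟩]
        simp only [AffineMap.coe_smul, Pi.smul_apply, smul_eq_mul]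
        linarith
      · exact absurd ⟨hx, hxl⟩ hxn
  refine Set.Subset.antisymm hsub (aux_cover (hsub₁.1.union hsub₂.1) hsub hconv (fun x hx => hx.1) ?_)
  rw [Set.sUnion_union, hsub₁.2.2.1, hsub₂.2.2.1]
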